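/- arXiv:2508.17145 — 4 statements merged into one kernel-verified Lean document; each statement's English description precedes it below -/
import Mathlib

section
/- Let X be a positive real-valued random variable with finite mean μ = E[X] > 0 and finite second moment. Fix q > 0, set p = P(X ≤ q), m = E[X·1{X ≤ q}]/μ, Y = X·1{X ≤ q} − m·X, and Z = 1{X ≤ q} − p. Then E[Y²] − E[(Y − qZ)²] = 2q·m(1 − m)·μ − q²·p(1 − p). Equivalently, the difference between the asymptotic variances of the fixed-threshold and estimated-threshold estimators satisfies V_a{m̂(q)} − V_a{m̂(q̂)} = q·[2m(1−m)μ − q·p(1−p)]/(n·μ²). -/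
open MeasureTheory ProbabilityTheory Filter Real
open scoped ENNReal NNReal Topology

/-!
Write `s` for the event `{X ≤ q}`. Both `Y` and `Y - q Z` are centred, so their second moments are
variances, and bilinearity of the covariance gives
`Var[Y] - Var[Y - q Z] = 2 q Cov[Y, Z] - q² Var[Z]`.
Up to a constant `Z` is the indicator of `s`, hence `Var[Z] = p (1 - p)`, while
`Cov[Y, Z] = E[Y; s] = (1 - m) E[X; s] = m (1 - m) μ` because `E[Y] = 0`.
-/

section

variable {Ω : Type*} {mΩ : MeasurableSpace Ω} {P : Measure Ω} {s : Set Ω} {X Y Z : Ω → ℝ}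

lemma variance_sub_variance_sub_const_mul [IsFiniteMeasure P] (hY : MemLp Y 2 P)
    (hZ : MemLp Z 2 P) (c : ℝ) :
    Var[Y; P] - Var[fun ω ↦ Y ω - c * Z ω; P] = 2 * c * cov[Y, Z; P] - c ^ 2 * Var[Z; P] := by
  rw [variance_fun_sub hY (hZ.const_mul c), variance_const_mul, covariance_const_mul_right]
  ring

lemma covariance_indicator_one_right [IsProbabilityMeasure P] (hY : Integrable Y P)
    (hs : MeasurableSet s) :
    cov[Y, s.indicator 1; P] = ∫ ω in s, Y ω ∂P - P.real s * P[Y] := by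
  have hcentred : Integrable (fun ω ↦ Y ω - P[Y]) P := hY.sub (integrable_const _)
  calc cov[Y, s.indicator 1; P]
      = ∫ ω, (s.indicator (fun ω ↦ Y ω - P[Y]) ω - P.real s * (Y ω - P[Y])) ∂P := by
        rw [covariance, integral_indicator_one hs]
        congr with ω
        by_cases hω : ω ∈ s
        · simp only [hω, Set.indicator_of_mem, Pi.one_apply]
          ring
        · simp only [hω, not_false_eq_true, Set.indicator_of_notMem]
          ring
    _ = ∫ ω in s, (Y ω - P[Y]) ∂P - P.real s * ∫ ω, (Y ω - P[Y]) ∂P := by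
        rw [integral_sub (hcentred.indicator hs) (hcentred.const_mul _), integral_indicator hs,
          integral_const_mul]
    _ = ∫ ω in s, Y ω ∂P - P.real s * P[Y] := by
        rw [integral_sub hY.integrableOn (integrable_const _), setIntegral_const,
          integral_sub hY (integrable_const _)]
        simp

lemma variance_indicator_one [IsProbabilityMeasure P] (hs : MeasurableSet s) :
    Var[s.indicator 1; P] = P.real s * (1 - P.real s) := by
  have hI : Integrable (s.indicator (1 : Ω → ℝ)) P := (integrable_const 1).indicator hs
  rw [← covariance_self hI.aemeasurable, covariance_indicator_one_right hI hs,
    setIntegral_indicator hs, integral_indicator_one hs]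
  simp only [Set.inter_self, Pi.one_apply, setIntegral_const, smul_eq_mul, mul_one]
  ring

lemma integral_indicator_sub_const_mul (hX : Integrable X P) (hs : MeasurableSet s) (c : ℝ) :
    ∫ ω, (s.indicator X ω - c * X ω) ∂P = ∫ ω in s, X ω ∂P - c * ∫ ω, X ω ∂P := by
  rw [integral_sub (hX.indicator hs) (hX.const_mul c), integral_indicator hs, integral_const_mul]

lemma setIntegral_indicator_sub_const_mul (hs : MeasurableSet s) (c : ℝ) :
    ∫ ω in s, (s.indicator X ω - c * X ω) ∂P = (1 - c) * ∫ ω in s, X ω ∂P := by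
  rw [← integral_const_mul]
  refine setIntegral_congr_fun hs fun ω hω ↦ ?_
  simp only [Set.indicator_of_mem hω]
  ring

lemma integral_sq_sub_integral_sq_sub_mul_indicator [IsProbabilityMeasure P] (hY : MemLp Y 2 P)
    (hY₀ : P[Y] = 0) (hs : MeasurableSet s) (c : ℝ) :
    ∫ ω, Y ω ^ 2 ∂P - ∫ ω, (Y ω - c * (s.indicator 1 ω - P.real s)) ^ 2 ∂P
      = 2 * c * ∫ ω in s, Y ω ∂P - c ^ 2 * (P.real s * (1 - P.real s)) := by
  have hI : MemLp (s.indicator (1 : Ω → ℝ)) 2 P := (memLp_const 1).indicator hs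
  have hZ : MemLp (fun ω ↦ s.indicator 1 ω - P.real s) 2 P := hI.sub (memLp_const _)
  have hYZ : MemLp (fun ω ↦ Y ω - c * (s.indicator 1 ω - P.real s)) 2 P := hY.sub (hZ.const_mul c)
  have hZ₀ : ∫ ω, (s.indicator 1 ω - P.real s) ∂P = 0 := by
    rw [integral_sub (hI.integrable one_le_two) (integrable_const _), integral_indicator_one hs]
    simp
  have hYZ₀ : ∫ ω, (Y ω - c * (s.indicator 1 ω - P.real s)) ∂P = 0 := by
    rw [integral_sub (hY.integrable one_le_two) ((hZ.integrable one_le_two).const_mul c),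
      integral_const_mul, hY₀, hZ₀, mul_zero, sub_zero]
  rw [← variance_of_integral_eq_zero hY.aemeasurable hY₀,
    ← variance_of_integral_eq_zero hYZ.aemeasurable hYZ₀,
    variance_sub_variance_sub_const_mul hY hZ,
    covariance_sub_const_right (hI.integrable one_le_two),
    variance_sub_const hI.aestronglyMeasurable,
    covariance_indicator_one_right (hY.integrable one_le_two) hs, variance_indicator_one hs,
    hY₀, mul_zero, sub_zero]

theorem stmt_4_general [IsProbabilityMeasure P] (hX : MemLp X 2 P) (hs : MeasurableSet s)
    {μ : ℝ} (hμ : μ = ∫ ω, X ω ∂P) (hμ₀ : μ ≠ 0) (q : ℝ)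
    {p : ℝ} (hp : p = P.real s) {m : ℝ} (hm : m = (∫ ω, s.indicator X ω ∂P) / μ)
    (hY : ∀ ω, Y ω = s.indicator X ω - m * X ω) (hZ : ∀ ω, Z ω = s.indicator 1 ω - p) :
    ∫ ω, Y ω ^ 2 ∂P - ∫ ω, (Y ω - q * Z ω) ^ 2 ∂P
        = 2 * q * (m * (1 - m)) * μ - q ^ 2 * (p * (1 - p)) ∧
      ∀ n : ℕ, 0 < n →
        (∫ ω, Y ω ^ 2 ∂P) / (n * μ ^ 2) - (∫ ω, (Y ω - q * Z ω) ^ 2 ∂P) / (n * μ ^ 2)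
          = q * (2 * (m * (1 - m)) * μ - q * (p * (1 - p))) / (n * μ ^ 2) := by
  have hsX : ∫ ω in s, X ω ∂P = m * μ := by
    rw [hm, integral_indicator hs, div_mul_cancel₀ _ hμ₀]
  have hYL2 : MemLp (fun ω ↦ s.indicator X ω - m * X ω) 2 P :=
    (hX.indicator hs).sub (hX.const_mul m)
  have hY₀ : ∫ ω, (s.indicator X ω - m * X ω) ∂P = 0 := by
    rw [integral_indicator_sub_const_mul (hX.integrable one_le_two) hs, hsX, ← hμ, sub_self]
  have hdiff : ∫ ω, Y ω ^ 2 ∂P - ∫ ω, (Y ω - q * Z ω) ^ 2 ∂P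
      = 2 * q * (m * (1 - m)) * μ - q ^ 2 * (p * (1 - p)) := by
    simp only [hY, hZ, hp]
    rw [integral_sq_sub_integral_sq_sub_mul_indicator hYL2 hY₀ hs,
      setIntegral_indicator_sub_const_mul hs, hsX]
    ring
  refine ⟨hdiff, fun n _ ↦ ?_⟩
  rw [← sub_div, hdiff]
  ring

end

theorem stmt_4
    {Ω : Type*} [MeasureSpace Ω] [IsProbabilityMeasure (ℙ : Measure Ω)]
    (X : Ω → ℝ) (hmeas : Measurable X)
    (hpos : ∀ᵐ ω ∂ℙ, 0 < X ω)
    (hint : Integrable X ℙ)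
    (hint2 : Integrable (fun ω => (X ω) ^ 2) ℙ)
    (μ : ℝ) (hμ : μ = ∫ ω, X ω ∂ℙ) (hμpos : 0 < μ)
    (q : ℝ) (hq : 0 < q)
    (p : ℝ) (hp : p = (ℙ {ω | X ω ≤ q}).toReal)
    (m : ℝ) (hm : m = (∫ ω, (if X ω ≤ q then X ω else 0) ∂ℙ) / μ)
    (Y Z : Ω → ℝ)
    (hY : ∀ ω, Y ω = (if X ω ≤ q then X ω else 0) - m * X ω)
    (hZ : ∀ ω, Z ω = (if X ω ≤ q then (1 : ℝ) else 0) - p) :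
    (∫ ω, (Y ω) ^ 2 ∂ℙ) - (∫ ω, (Y ω - q * Z ω) ^ 2 ∂ℙ)
        = 2 * q * (m * (1 - m)) * μ - q ^ 2 * (p * (1 - p)) ∧
      ∀ n : ℕ, 0 < n →
        (∫ ω, (Y ω) ^ 2 ∂ℙ) / (n * μ ^ 2) - (∫ ω, (Y ω - q * Z ω) ^ 2 ∂ℙ) / (n * μ ^ 2)
          = q * (2 * (m * (1 - m)) * μ - q * (p * (1 - p))) / (n * μ ^ 2) :=
  stmt_4_general ((memLp_two_iff_integrable_sq hint.aestronglyMeasurable).2 hint2)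
    (measurableSet_le hmeas measurable_const) hμ hμpos.ne' q hp
    (by simpa [Set.indicator_apply] using hm) (by simpa [Set.indicator_apply] using hY)
    (by simpa [Set.indicator_apply] using hZ)
end

section
/- Let X be a positive real-valued random variable with finite mean μ = E[X] > 0, finite variance σ², and finite second moment. Fix q > 0, set p = P(X ≤ q) with 0 < p < 1, m = E[X·1{X ≤ q}]/μ, Y = X·1{X ≤ q} − m·X, Z = 1{X ≤ q} − p, γ = m·μ/p, and ε² = E[X²·1{X ≤ q}]/p − γ². Then E[(Y − qZ)²]/μ² = [σ²·m² + (1 − 2m)·p·ε² + p(1 − p)·(q − γ)² − 2p·m·(q − γ)·(μ − γ)]/μ². That is, the proposed asymptotic variance of m̂(q̂) coincides with the Beach–Davidson asymptotic variance formula. -/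
open MeasureTheory ProbabilityTheory Filter Real
open scoped ENNReal NNReal Topology

/-!
The identity holds for any event `s` in place of `{X ≤ q}`. Write `p` for its probability, and `γ`
and `ε²` for the mean and variance of `X` given `s`. Since `Y` and `Z` are centered and `Y - q Z`
differs from `𝟙ₛ (X - q) - m X` by a constant,
`E[(Y - q Z)²] = Var[𝟙ₛ (X - q)] - 2 m Cov[𝟙ₛ (X - q), X] + m² Var[X]`. Conditioning on `s` gives
`Var[𝟙ₛ (X - q)] = p ε² + p (1 - p) (γ - q)²` and `Cov[𝟙ₛ (X - q), X] = p (ε² + (γ - q) (γ - μ))`,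
and the sum is the Beach–Davidson expression.
-/

section Conditioning

variable {Ω : Type*} {mΩ : MeasurableSpace Ω} {P : Measure Ω} {s : Set Ω}

lemma integral_indicator_eq_smul_integral_cond {E : Type*} [NormedAddCommGroup E] [NormedSpace ℝ E]
    (hs : MeasurableSet s) (hs_top : P s ≠ ∞) (f : Ω → E) :
    ∫ ω, s.indicator f ω ∂P = P.real s • ∫ ω, f ω ∂P[|s] := by
  rw [integral_indicator hs, ProbabilityTheory.cond, integral_smul_measure, ENNReal.toReal_inv,
    ← measureReal_def, smul_smul]
  obtain h0 | h0 := eq_or_ne (P.real s) 0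
  · rw [setIntegral_measure_zero f ((measureReal_eq_zero_iff hs_top).1 h0), smul_zero]
  · rw [mul_inv_cancel₀ h0, one_smul]

lemma memLp_cond {E : Type*} [NormedAddCommGroup E] {f : Ω → E} {r : ℝ≥0∞}
    (hf : MemLp f r P) (hs0 : P s ≠ 0) : MemLp f r P[|s] :=
  (hf.restrict s).smul_measure (ENNReal.inv_ne_top.2 hs0)

variable [IsProbabilityMeasure P] {X Y : Ω → ℝ}

lemma covariance_indicator_left (hX : MemLp X 2 P) (hY : MemLp Y 2 P) (hs : MeasurableSet s)
    (hs0 : P s ≠ 0) :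
    cov[s.indicator X, Y; P]
      = P.real s * (cov[X, Y; P[|s]] + P[|s][X] * (P[|s][Y] - P[Y])) := by
  have := cond_isProbabilityMeasure hs0
  have hmul : s.indicator X * Y = s.indicator (X * Y) :=
    funext fun _ ↦ (Set.indicator_mul_left s X Y).symm
  rw [covariance_eq_sub (hX.indicator hs) hY,
    covariance_eq_sub (memLp_cond hX hs0) (memLp_cond hY hs0), hmul,
    integral_indicator_eq_smul_integral_cond hs (measure_ne_top P s),
    integral_indicator_eq_smul_integral_cond hs (measure_ne_top P s), smul_eq_mul, smul_eq_mul]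
  ring

lemma variance_indicator (hX : MemLp X 2 P) (hs : MeasurableSet s) (hs0 : P s ≠ 0) :
    Var[s.indicator X; P]
      = P.real s * (Var[X; P[|s]] + (1 - P.real s) * P[|s][X] ^ 2) := by
  have := cond_isProbabilityMeasure hs0
  have hsq : s.indicator X ^ 2 = s.indicator (X ^ 2) := by
    rw [sq, sq]
    exact (Set.indicator_mul s X X).symm
  rw [variance_eq_sub (hX.indicator hs), variance_eq_sub (memLp_cond hX hs0), hsq,
    integral_indicator_eq_smul_integral_cond hs (measure_ne_top P s),
    integral_indicator_eq_smul_integral_cond hs (measure_ne_top P s), smul_eq_mul, smul_eq_mul]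
  ring

lemma variance_indicator_sub_const_sub_const_mul (hX : MemLp X 2 P) (hs : MeasurableSet s)
    (hs0 : P s ≠ 0) (q m : ℝ) :
    Var[fun ω ↦ s.indicator (fun ω ↦ X ω - q) ω - m * X ω; P]
      = Var[X; P] * m ^ 2 + (1 - 2 * m) * P.real s * Var[X; P[|s]]
        + P.real s * (1 - P.real s) * (q - P[|s][X]) ^ 2
        - 2 * P.real s * m * (q - P[|s][X]) * (P[X] - P[|s][X]) := by
  have := cond_isProbabilityMeasure hs0
  have hXq : MemLp (fun ω ↦ X ω - q) 2 P := hX.sub (memLp_const q)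
  have hXc : MemLp X 2 P[|s] := memLp_cond hX hs0
  have hXi : Integrable X P[|s] := hXc.integrable one_le_two
  have hmean : P[|s][fun ω ↦ X ω - q] = P[|s][X] - q := by
    rw [integral_sub hXi (integrable_const q), integral_const, probReal_univ, one_smul]
  have hvar : Var[s.indicator (fun ω ↦ X ω - q); P]
      = P.real s * (Var[X; P[|s]] + (1 - P.real s) * (P[|s][X] - q) ^ 2) := by
    rw [variance_indicator hXq hs hs0, variance_sub_const hXc.aestronglyMeasurable, hmean]
  have hcov : cov[s.indicator (fun ω ↦ X ω - q), X; P]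
      = P.real s * (Var[X; P[|s]] + (P[|s][X] - q) * (P[|s][X] - P[X])) := by
    rw [covariance_indicator_left hXq hX hs hs0, covariance_sub_const_left hXi,
      covariance_self hXc.aemeasurable, hmean]
  rw [variance_fun_sub (hXq.indicator hs) (hX.const_mul m), covariance_const_mul_right,
    variance_const_mul, hvar, hcov]
  ring

lemma integral_sq_centered_sub_eq_variance (hX : Integrable X P) (hs : MeasurableSet s) {m : ℝ}
    (hm : m * P[X] = ∫ ω, s.indicator X ω ∂P) (q : ℝ) :
    ∫ ω, (s.indicator X ω - m * X ω - q * (s.indicator 1 ω - P.real s)) ^ 2 ∂P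
      = Var[fun ω ↦ s.indicator (fun ω ↦ X ω - q) ω - m * X ω; P] := by
  let W : Ω → ℝ := fun ω ↦ s.indicator X ω - m * X ω - q * (s.indicator 1 ω - P.real s)
  have hY : Integrable (fun ω ↦ s.indicator X ω - m * X ω) P :=
    (hX.indicator hs).sub (hX.const_mul m)
  have hI : Integrable (s.indicator (1 : Ω → ℝ)) P := (integrable_const 1).indicator hs
  have hZ : Integrable (fun ω ↦ s.indicator (1 : Ω → ℝ) ω - P.real s) P :=
    hI.sub (integrable_const _)
  have hY0 : ∫ ω, s.indicator X ω - m * X ω ∂P = 0 := by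
    rw [integral_sub (hX.indicator hs) (hX.const_mul m), integral_const_mul, hm, sub_self]
  have hZ0 : ∫ ω, s.indicator (1 : Ω → ℝ) ω - P.real s ∂P = 0 := by
    rw [integral_sub hI (integrable_const _), integral_indicator_one hs, integral_const,
      probReal_univ, one_smul, sub_self]
  have hW0 : P[W] = 0 := by
    rw [integral_sub hY (hZ.const_mul q), integral_const_mul, hY0, hZ0, mul_zero, sub_zero]
  have hWshift : W = fun ω ↦ s.indicator (fun ω ↦ X ω - q) ω - m * X ω + q * P.real s := by
    ext ω
    by_cases hω : ω ∈ s
    · simp only [W, Set.indicator_of_mem hω, Pi.one_apply]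
      ring
    · simp only [W, Set.indicator_of_notMem hω]
      ring
  calc ∫ ω, W ω ^ 2 ∂P = Var[W; P] :=
        (variance_of_integral_eq_zero (hY.sub (hZ.const_mul q)).aemeasurable hW0).symm
    _ = Var[fun ω ↦ s.indicator (fun ω ↦ X ω - q) ω - m * X ω; P] := by
        rw [hWshift, variance_add_const]
        exact (((hX.sub (integrable_const q)).indicator hs).sub
          (hX.const_mul m)).aestronglyMeasurable

end Conditioning

theorem stmt_7_general {Ω : Type*} {mΩ : MeasurableSpace Ω} {P : Measure Ω} [IsProbabilityMeasure P]
    {X : Ω → ℝ} (hX : MemLp X 2 P) {s : Set Ω} (hs : MeasurableSet s) (q : ℝ)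
    {μ σ2 p m γ ε2 : ℝ} (hμ : μ = ∫ ω, X ω ∂P) (hμ0 : μ ≠ 0)
    (hσ2 : σ2 = (∫ ω, X ω ^ 2 ∂P) - μ ^ 2) (hp : p = P.real s) (hp0 : p ≠ 0)
    (hm : m = (∫ ω, s.indicator X ω ∂P) / μ) (hγ : γ = m * μ / p)
    (hε2 : ε2 = (∫ ω, s.indicator (fun ω ↦ X ω ^ 2) ω ∂P) / p - γ ^ 2) :
    ∫ ω, (s.indicator X ω - m * X ω - q * (s.indicator 1 ω - p)) ^ 2 ∂P
      = σ2 * m ^ 2 + (1 - 2 * m) * p * ε2 + p * (1 - p) * (q - γ) ^ 2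
        - 2 * p * m * (q - γ) * (μ - γ) := by
  have hs0 : P s ≠ 0 := fun h ↦ hp0 (by rw [hp, measureReal_def, h, ENNReal.toReal_zero])
  have := cond_isProbabilityMeasure hs0
  have hcond (f : Ω → ℝ) : (∫ ω, s.indicator f ω ∂P) / p = P[|s][f] := by
    rw [integral_indicator_eq_smul_integral_cond hs (measure_ne_top P s), ← hp, smul_eq_mul,
      mul_div_cancel_left₀ _ hp0]
  have hmμ : m * μ = ∫ ω, s.indicator X ω ∂P := by rw [hm, div_mul_cancel₀ _ hμ0]
  have hγ' : γ = P[|s][X] := by rw [hγ, hmμ, hcond]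
  have hε2' : ε2 = Var[X; P[|s]] := by
    rw [variance_eq_sub (memLp_cond hX hs0), hε2, hcond, hγ']
    rfl
  have hσ2' : σ2 = Var[X; P] := by
    rw [variance_eq_sub hX, hσ2, hμ]
    rfl
  rw [hp, integral_sq_centered_sub_eq_variance (hX.integrable one_le_two) hs (hμ ▸ hmμ),
    variance_indicator_sub_const_sub_const_mul hX hs hs0, hμ, hσ2', hγ', hε2']

theorem stmt_7
    {Ω : Type*} [MeasureSpace Ω] [IsProbabilityMeasure (ℙ : Measure Ω)]
    (X : Ω → ℝ) (hmeas : Measurable X)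
    (hpos : ∀ᵐ ω ∂ℙ, 0 < X ω)
    (hint : Integrable X ℙ)
    (hint2 : Integrable (fun ω => (X ω) ^ 2) ℙ)
    (μ : ℝ) (hμ : μ = ∫ ω, X ω ∂ℙ) (hμpos : 0 < μ)
    (σ2 : ℝ) (hσ2 : σ2 = (∫ ω, (X ω) ^ 2 ∂ℙ) - μ ^ 2)
    (q : ℝ) (hq : 0 < q)
    (p : ℝ) (hp : p = (ℙ {ω | X ω ≤ q}).toReal) (hp01 : p ∈ Set.Ioo (0 : ℝ) 1)
    (m : ℝ) (hm : m = (∫ ω, (if X ω ≤ q then X ω else 0) ∂ℙ) / μ)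
    (Y Z : Ω → ℝ)
    (hY : ∀ ω, Y ω = (if X ω ≤ q then X ω else 0) - m * X ω)
    (hZ : ∀ ω, Z ω = (if X ω ≤ q then (1 : ℝ) else 0) - p)
    (γ : ℝ) (hγ : γ = m * μ / p)
    (ε2 : ℝ) (hε2 : ε2 = (∫ ω, (if X ω ≤ q then (X ω) ^ 2 else 0) ∂ℙ) / p - γ ^ 2) :
    (∫ ω, (Y ω - q * Z ω) ^ 2 ∂ℙ) / μ ^ 2
      = (σ2 * m ^ 2 + (1 - 2 * m) * p * ε2 + p * (1 - p) * (q - γ) ^ 2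
          - 2 * p * m * (q - γ) * (μ - γ)) / μ ^ 2 := by
  have hX : MemLp X 2 ℙ := (memLp_two_iff_integrable_sq hmeas.aestronglyMeasurable).2 hint2
  simp_rw [hY, hZ]
  exact congrArg (· / μ ^ 2) <| stmt_7_general hX (measurableSet_le hmeas measurable_const) q
    hμ hμpos.ne' hσ2 hp hp01.1.ne' hm hγ hε2
end

section
/- Define h(t) = 2(e^t − 1 − t)(1 + t) − t(e^t − 1) for t ∈ ℝ. Then h(t) ≥ 0 for all t ≥ 0. -/
/-- The rescaled difference between the asymptotic variances of the fixed-threshold and the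
estimated-threshold estimators of the first normalized incomplete moment of an exponential law of
rate `λ`, as a function of `t = λq` where `q` is the threshold. -/
noncomputable def varianceGap (t : ℝ) : ℝ :=
  2 * (Real.exp t - 1 - t) * (1 + t) - t * (Real.exp t - 1)

theorem varianceGap_eq (t : ℝ) :
    varianceGap t = (2 + t) * Real.exp t - (2 + 3 * t + 2 * t ^ 2) := by
  rw [varianceGap]
  ring

/-- The constant is optimal: `5 / 6 * t ^ 3` is the leading Taylor term of `varianceGap` at `0`. -/
theorem mul_cube_le_varianceGap {t : ℝ} (ht : 0 ≤ t) : 5 / 6 * t ^ 3 ≤ varianceGap t := by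
  have cubic_le_exp : 1 + t + t ^ 2 / 2 + t ^ 3 / 6 ≤ Real.exp t := by
    simpa [Finset.sum_range_succ, Nat.factorial] using Real.sum_le_exp_of_nonneg ht 4
  calc 5 / 6 * t ^ 3
    _ ≤ 5 / 6 * t ^ 3 + t ^ 4 / 6 := le_add_of_nonneg_right (by positivity)
    _ = (2 + t) * (1 + t + t ^ 2 / 2 + t ^ 3 / 6) - (2 + 3 * t + 2 * t ^ 2) := by ring
    _ ≤ (2 + t) * Real.exp t - (2 + 3 * t + 2 * t ^ 2) := by gcongr
    _ = varianceGap t := (varianceGap_eq t).symm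

theorem stmt_12 (h : ℝ → ℝ)
    (hh : ∀ t, h t = 2 * (Real.exp t - 1 - t) * (1 + t) - t * (Real.exp t - 1)) :
    ∀ t : ℝ, 0 ≤ t → 0 ≤ h t := by
  intro t ht
  calc 0
    _ ≤ 5 / 6 * t ^ 3 := by positivity
    _ ≤ varianceGap t := mul_cube_le_varianceGap ht
    _ = h t := (hh t).symm
end

section
/- Let X be exponentially distributed with rate λ > 0, fix p ∈ (0,1), and let q = −ln(1 − p)/λ, μ = λ^{-1}, and m = 1 − e^{−λq}(1 + λq). Then 2m(1 − m)·μ ≥ q·p(1 − p); hence the difference of asymptotic variances V_a{m̂(q)} − V_a{m̂(q̂)} = q·[2m(1−m)μ − q·p(1−p)]/(n·μ²) is nonnegative, i.e., for the exponential distribution treating the quantile as fixed inflates the asymptotic variance. -/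
/-!
With `t = l * q ≥ 0` the survival probability `1 - p` is `exp (-t)`, and the difference of the two
sides is `l⁻¹ * exp (-t) ^ 2 * ((2 + t) * exp t - (2 + 3 * t + 2 * t ^ 2))`. The last factor is
nonnegative because `exp t ≥ 1 + t + t ^ 2 / 2`.
-/

section

open Real

theorem quadratic_le_two_add_mul_exp {t : ℝ} (ht : 0 ≤ t) :
    2 + 3 * t + 2 * t ^ 2 ≤ (2 + t) * exp t :=
  calc
    2 + 3 * t + 2 * t ^ 2 ≤ 2 + 3 * t + 2 * t ^ 2 + t ^ 3 / 2 :=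
      le_add_of_nonneg_right (by positivity)
    _ = (2 + t) * (1 + t + t ^ 2 / 2) := by ring
    _ ≤ (2 + t) * exp t := by gcongr; exact quadratic_le_exp_of_nonneg ht

theorem mul_one_sub_exp_neg_mul_exp_neg_le {t : ℝ} (ht : 0 ≤ t) :
    t * ((1 - exp (-t)) * exp (-t)) ≤
      2 * ((1 - exp (-t) * (1 + t)) * (exp (-t) * (1 + t))) := by
  have hinv : exp (-t) * exp t = 1 := by rw [← exp_add, neg_add_cancel, exp_zero]
  rw [← sub_nonneg]
  calc
    0 ≤ exp (-t) ^ 2 * ((2 + t) * exp t - (2 + 3 * t + 2 * t ^ 2)) :=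
      mul_nonneg (sq_nonneg _) (sub_nonneg.2 (quadratic_le_two_add_mul_exp ht))
    _ = _ := by linear_combination (2 + t) * exp (-t) * hinv

theorem mul_one_sub_exp_neg_mul_exp_neg_le_of_rate {l q : ℝ} (hl : 0 < l) (hq : 0 ≤ q) :
    q * ((1 - exp (-l * q)) * exp (-l * q)) ≤
      2 * ((1 - exp (-l * q) * (1 + l * q)) * (exp (-l * q) * (1 + l * q))) * l⁻¹ := by
  rw [← div_eq_mul_inv, le_div_iff₀' hl, ← mul_assoc, neg_mul]
  exact mul_one_sub_exp_neg_mul_exp_neg_le (mul_nonneg hl.le hq)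

theorem exp_neg_mul_neg_log_one_sub_div {l p : ℝ} (hl : l ≠ 0) (hp : p < 1) :
    exp (-l * (-log (1 - p) / l)) = 1 - p := by
  rw [neg_mul, mul_div_cancel₀ _ hl, neg_neg, exp_log (sub_pos.2 hp)]

theorem neg_log_one_sub_div_nonneg {l p : ℝ} (hl : 0 ≤ l) (hp₀ : 0 ≤ p) (hp₁ : p ≤ 1) :
    0 ≤ -log (1 - p) / l :=
  div_nonneg (neg_nonneg.2 (log_nonpos (sub_nonneg.2 hp₁) (sub_le_self 1 hp₀))) hl

end

theorem stmt_14 (l : ℝ) (hl : 0 < l) (p : ℝ) (hp : p ∈ Set.Ioo (0 : ℝ) 1)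
    (q μ m : ℝ) (hq : q = -Real.log (1 - p) / l) (hμ : μ = l⁻¹)
    (hm : m = 1 - Real.exp (-l * q) * (1 + l * q)) :
    2 * (m * (1 - m)) * μ ≥ q * (p * (1 - p)) ∧
      ∀ n : ℕ, 0 < n →
        0 ≤ q * (2 * (m * (1 - m)) * μ - q * (p * (1 - p))) / (n * μ ^ 2) := by
  have hq_nonneg : 0 ≤ q := hq ▸ neg_log_one_sub_div_nonneg hl.le hp.1.le hp.2.le
  have hsurvival : Real.exp (-l * q) = 1 - p :=
    hq ▸ exp_neg_mul_neg_log_one_sub_div hl.ne' hp.2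
  have hvariance : q * (p * (1 - p)) ≤ 2 * (m * (1 - m)) * μ := by
    have hcompl : Real.exp (-l * q) * (1 + l * q) = 1 - m := by rw [hm, sub_sub_cancel]
    have hbound := mul_one_sub_exp_neg_mul_exp_neg_le_of_rate hl hq_nonneg
    rwa [hcompl, hsurvival, ← hμ, sub_sub_cancel 1 p, sub_sub_cancel 1 m] at hbound
  exact ⟨hvariance, fun n _ =>
    div_nonneg (mul_nonneg hq_nonneg (sub_nonneg.2 hvariance)) (by positivity)⟩
end
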